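/- arXiv:2506.14996 — 2 statements merged into one kernel-verified Lean document; each statement's English description precedes it below -/
import Mathlib

section
/- For positive integers a and b, the expression [gcd(a,b)]_q / [a+b]_q * qbinom(a+b, a) is a polynomial in q with non-negative integer coefficients, where [n]_q = (1-q^n)/(1-q) and qbinom denotes the Gaussian binomial coefficient. -/
open Polynomial

/-- The `q`-integer `[n]_q = 1 + q + ⋯ + q^{n-1}` as an integer polynomial. -/
noncomputable def qInt (n : ℕ) : Polynomial ℤ := ∑ i ∈ Finset.range n, X ^ i

/-- The `q`-factorial `[n]_q! = [n]_q [n-1]_q ⋯ [1]_q`. -/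
noncomputable def qFact : ℕ → Polynomial ℤ
  | 0 => 1
  | n + 1 => qFact n * qInt (n + 1)

/-!
Every common divisor of `[m] G` and `[n] G` divides `[gcd m n] G`, by Euclid's algorithm. For
`G = qbinom(a+b, a)`, both `[a] G` and `[b] G` are multiples of `[a+b]`, so the quotient
`P = [gcd a b] G / [a+b]` is a polynomial, and it is palindromic because `G` and all `[n]` are.

With `d = gcd a b`, we have `P (1 - q^(a+b)) = G (1 - q^d)`. The coefficients of `G` are the
dimensions of the weight spaces of the `sl₂`-module `Sym^a(Sym^b)`, and the raising operator is
injective below the middle weight: a nonzero vector it kills is primitive, so its weight is a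
natural number. Hence the coefficients of `G` increase up to the middle degree, so those of `P` are
non-negative up to there, and the remaining ones follow by symmetry since `deg P ≤ deg G`.
-/

section QInteger

lemma qInt_add (m n : ℕ) : qInt (m + n) = qInt m + X ^ m * qInt n := by
  simp only [qInt, Finset.sum_range_add, Finset.mul_sum, pow_add]

lemma qInt_mul_one_sub_X (n : ℕ) : qInt n * (1 - X) = 1 - X ^ n := by
  rw [qInt]
  linear_combination -geom_sum_mul (X : ℤ[X]) n

lemma coeff_qInt (n i : ℕ) : (qInt n).coeff i = if i < n then 1 else 0 := by
  simp [qInt, coeff_X_pow]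

lemma qInt_ne_zero {n : ℕ} (hn : 0 < n) : qInt n ≠ 0 := by
  intro h
  simpa [hn, h] using coeff_qInt n 0

lemma natDegree_qInt (n : ℕ) : (qInt n).natDegree = n - 1 := by
  obtain rfl | hn := n.eq_zero_or_pos
  · simp [qInt]
  · refine natDegree_eq_of_le_of_coeff_ne_zero (natDegree_le_iff_coeff_eq_zero.2 fun i hi ↦ ?_) ?_
    · rw [coeff_qInt, if_neg (by omega)]
    · rw [coeff_qInt, if_pos (by omega)]
      exact one_ne_zero

lemma reverse_qInt (n : ℕ) : (qInt n).reverse = qInt n := by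
  ext i
  rw [coeff_reverse, natDegree_qInt]
  obtain hi | hi := le_or_gt i (n - 1)
  · rw [revAt_le hi, coeff_qInt, coeff_qInt]
    congr 1
    grind
  · rw [revAt_eq_self_of_lt hi]

lemma qInt_dvd_qInt_mul (m k : ℕ) : qInt m ∣ qInt (m * k) := by
  induction k with
  | zero => simp [qInt]
  | succ k ih =>
    rw [Nat.mul_succ, qInt_add]
    exact dvd_add ih (dvd_mul_left _ _)

lemma dvd_qInt_gcd_mul {p G : ℤ[X]} {m n : ℕ} (hm : p ∣ qInt m * G) (hn : p ∣ qInt n * G) :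
    p ∣ qInt (Nat.gcd m n) * G := by
  induction m, n using Nat.gcd.induction with
  | H0 n => simpa using hn
  | H1 m n _ ih =>
    rw [Nat.gcd_rec]
    refine ih ?_ hm
    have division : qInt n * G =
        qInt (n % m) * G + X ^ (n % m) * (qInt (m * (n / m)) * G) := by
      conv_lhs => rw [← Nat.mod_add_div n m, qInt_add]
      ring
    rw [division] at hn
    exact (dvd_add_left ((hm.trans (mul_dvd_mul_right (qInt_dvd_qInt_mul m _) G)).mul_left _)).1 hn

lemma qFact_succ (n : ℕ) : qFact (n + 1) = qFact n * qInt (n + 1) := rfl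

lemma qFact_ne_zero (n : ℕ) : qFact n ≠ 0 := by
  induction n with
  | zero => exact one_ne_zero
  | succ n ih => exact mul_ne_zero ih (qInt_ne_zero n.succ_pos)

lemma natDegree_qFact (n : ℕ) : (qFact n).natDegree = n.choose 2 := by
  induction n with
  | zero => simp [qFact]
  | succ n ih =>
    rw [qFact_succ, natDegree_mul (qFact_ne_zero n) (qInt_ne_zero n.succ_pos), ih, natDegree_qInt,
      Nat.choose_succ_succ', Nat.choose_one_right, Nat.succ_sub_one, add_comm]

lemma reverse_qFact (n : ℕ) : (qFact n).reverse = qFact n := by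
  induction n with
  | zero => rw [qFact, ← C_1, reverse_C]
  | succ n ih => rw [qFact_succ, reverse_mul_of_domain, ih, reverse_qInt]

end QInteger

section GaussianBinomial

/-- The Gaussian binomial `qbinom(a+b, a)`, encoded as the sum of `q ^ ∑ i * dᵢ` over the monomials
`x₀ ^ d₀ ⋯ x_b ^ d_b` of degree `a`; thus `b` is the largest index rather than the number of
variables. -/
noncomputable def qBinom (a b : ℕ) : ℤ[X] :=
  ∑ d ∈ (Finset.univ : Finset (Fin (b + 1))).finsuppAntidiag a, X ^ ∑ i, d i * (i : ℕ)

lemma mk_pow_mul_one_sub_C_mul_X {R : Type*} [CommRing R] (r : R) :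
    PowerSeries.mk (fun n ↦ r ^ n) * (1 - PowerSeries.C r * PowerSeries.X) = 1 := by
  simpa [PowerSeries.rescale_mk, PowerSeries.rescale_X] using
    congrArg (PowerSeries.rescale r) (PowerSeries.mk_one_mul_one_sub_eq_one R)

lemma qBinom_eq_coeff_prod (a b : ℕ) :
    qBinom a b = PowerSeries.coeff a
      (∏ i : Fin (b + 1), PowerSeries.mk fun n ↦ ((X : ℤ[X]) ^ (i : ℕ)) ^ n) := by
  simp only [qBinom, PowerSeries.coeff_prod, PowerSeries.coeff_mk, Finset.prod_pow_eq_pow_sum,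
    ← pow_mul, mul_comm]

lemma qBinom_zero_left (b : ℕ) : qBinom 0 b = 1 := by
  simp [qBinom]

lemma qBinom_zero_right (a : ℕ) : qBinom a 0 = 1 := by
  simp [qBinom_eq_coeff_prod]

lemma qBinom_succ_succ (a b : ℕ) :
    qBinom (a + 1) (b + 1) = qBinom (a + 1) b + X ^ (b + 1) * qBinom a (b + 1) := by
  have cancel_last : (∏ i : Fin (b + 2), PowerSeries.mk fun n ↦ ((X : ℤ[X]) ^ (i : ℕ)) ^ n) *
      (1 - PowerSeries.C (X ^ (b + 1)) * PowerSeries.X) =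
        ∏ i : Fin (b + 1), PowerSeries.mk fun n ↦ ((X : ℤ[X]) ^ (i : ℕ)) ^ n := by
    rw [Fin.prod_univ_castSucc, mul_assoc, Fin.val_last, mk_pow_mul_one_sub_C_mul_X, mul_one]
    simp only [Fin.val_castSucc]
  simp only [qBinom_eq_coeff_prod, ← cancel_last]
  rw [mul_sub, mul_one, mul_left_comm, map_sub, PowerSeries.coeff_C_mul,
    PowerSeries.coeff_succ_mul_X, sub_add_cancel]

theorem qBinom_mul_qFact_mul_qFact (a b : ℕ) :
    qBinom a b * qFact a * qFact b = qFact (a + b) := by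
  induction a generalizing b with
  | zero => simp [qBinom_zero_left, qFact]
  | succ a iha =>
    induction b with
    | zero => simp [qBinom_zero_right, qFact]
    | succ b ihb =>
      have split : qFact (a + 1 + (b + 1)) =
          qFact (a + 1 + b) * qInt (b + 1) +
            X ^ (b + 1) * (qFact (a + (b + 1)) * qInt (a + 1)) := by
        rw [show a + (b + 1) = a + 1 + b by omega, ← add_assoc, qFact_succ,
          show a + 1 + b + 1 = b + 1 + (a + 1) by omega, qInt_add]
        ring
      rw [split, ← ihb, ← iha (b + 1), qBinom_succ_succ, qFact_succ a, qFact_succ b]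
      ring

lemma qBinom_ne_zero (a b : ℕ) : qBinom a b ≠ 0 := by
  intro h
  have := qBinom_mul_qFact_mul_qFact a b
  simp only [h, zero_mul] at this
  exact qFact_ne_zero _ this.symm

lemma natDegree_qBinom (a b : ℕ) : (qBinom a b).natDegree = a * b := by
  have choose_two_add : (a + b).choose 2 = a * b + a.choose 2 + b.choose 2 := by
    induction b with
    | zero => simp
    | succ b ih =>
      rw [← add_assoc, Nat.choose_succ_succ', ih, Nat.choose_succ_succ' b, Nat.choose_one_right,
        Nat.choose_one_right]
      ring
  have h := congrArg natDegree (qBinom_mul_qFact_mul_qFact a b)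
  rw [natDegree_mul (mul_ne_zero (qBinom_ne_zero a b) (qFact_ne_zero a)) (qFact_ne_zero b),
    natDegree_mul (qBinom_ne_zero a b) (qFact_ne_zero a), natDegree_qFact, natDegree_qFact,
    natDegree_qFact, choose_two_add] at h
  omega

lemma reverse_qBinom (a b : ℕ) : (qBinom a b).reverse = qBinom a b := by
  have h := congrArg reverse (qBinom_mul_qFact_mul_qFact a b)
  simp only [reverse_mul_of_domain, reverse_qFact] at h
  rw [← qBinom_mul_qFact_mul_qFact a b] at h
  exact mul_right_cancel₀ (qFact_ne_zero a) (mul_right_cancel₀ (qFact_ne_zero b) h)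

lemma qBinom_comm (a b : ℕ) : qBinom a b = qBinom b a := by
  refine mul_right_cancel₀ (mul_ne_zero (qFact_ne_zero a) (qFact_ne_zero b)) ?_
  rw [← mul_assoc, qBinom_mul_qFact_mul_qFact, mul_comm (qFact a), ← mul_assoc,
    qBinom_mul_qFact_mul_qFact, add_comm]

lemma qInt_succ_mul_qBinom_succ (a b : ℕ) :
    qInt (a + 1) * qBinom (a + 1) b = qInt (a + 1 + b) * qBinom a b := by
  refine mul_right_cancel₀ (mul_ne_zero (qFact_ne_zero a) (qFact_ne_zero b)) ?_
  calc qInt (a + 1) * qBinom (a + 1) b * (qFact a * qFact b)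
      = qBinom (a + 1) b * qFact (a + 1) * qFact b := by rw [qFact_succ]; ring
    _ = qFact (a + b) * qInt (a + 1 + b) := by
        rw [qBinom_mul_qFact_mul_qFact, add_right_comm, qFact_succ]
    _ = qInt (a + 1 + b) * qBinom a b * (qFact a * qFact b) := by
        rw [← qBinom_mul_qFact_mul_qFact]; ring

lemma qInt_add_dvd_qInt_mul_qBinom (a b : ℕ) : qInt (a + b) ∣ qInt a * qBinom a b := by
  cases a with
  | zero => simp [qInt]
  | succ a => exact ⟨qBinom a b, qInt_succ_mul_qBinom_succ a b⟩

theorem qInt_add_dvd_qInt_gcd_mul_qBinom (a b : ℕ) :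
    qInt (a + b) ∣ qInt (Nat.gcd a b) * qBinom a b := by
  refine dvd_qInt_gcd_mul (qInt_add_dvd_qInt_mul_qBinom a b) ?_
  rw [add_comm, qBinom_comm]
  exact qInt_add_dvd_qInt_mul_qBinom b a

end GaussianBinomial

section WeightedDerivation

variable {σ R M : Type*} [CommRing R] [AddCommMonoid M] {w : σ → M} {m : M}
  {φ : MvPolynomial σ R}

lemma isWeightedHomogeneous_mkDerivation {f : σ → MvPolynomial σ R} {k : M}
    (hf : ∀ i, (f i).IsWeightedHomogeneous w (w i + k)) (hφ : φ.IsWeightedHomogeneous w m) :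
    (MvPolynomial.mkDerivation R f φ).IsWeightedHomogeneous w (m + k) := by
  induction hφ using MvPolynomial.IsWeightedHomogeneous.induction_on with
  | zero => simpa using MvPolynomial.isWeightedHomogeneous_zero R w (m + k)
  | add p q _ _ hp hq => simpa only [map_add] using hp.add hq
  | monomial d r hd =>
    rw [MvPolynomial.mkDerivation_monomial]
    refine (MvPolynomial.weightedHomogeneousSubmodule R w (m + k)).smul_mem r
      (Submodule.sum_mem _ fun i hi ↦ ?_)
    have weight_eq : Finsupp.weight w (d - Finsupp.single i 1) + (w i + k) = m + k := by
      rw [← add_assoc, Finsupp.weight_sub_single_add (Finsupp.mem_support_iff.1 hi), hd]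
    exact weight_eq ▸ (MvPolynomial.isWeightedHomogeneous_monomial w _ _ rfl).mul (hf i)

lemma mkDerivation_smul_X_eq_smul (ℓ : M →+ R) (hφ : φ.IsWeightedHomogeneous w m) :
    MvPolynomial.mkDerivation R (fun i ↦ ℓ (w i) • MvPolynomial.X i) φ = ℓ m • φ := by
  induction hφ using MvPolynomial.IsWeightedHomogeneous.induction_on with
  | zero => simp
  | add p q _ _ hp hq => rw [map_add, hp, hq, smul_add]
  | monomial d r hd =>
    have term_eq : ∀ i ∈ d.support,
        MvPolynomial.monomial (d - Finsupp.single i 1) (d i : R) • ℓ (w i) • MvPolynomial.X i =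
          (d i • ℓ (w i)) • MvPolynomial.monomial d (1 : R) := by
      intro i hi
      rw [smul_comm, smul_eq_mul, MvPolynomial.X, MvPolynomial.monomial_mul,
        Finsupp.sub_add_single_one_cancel (Finsupp.mem_support_iff.1 hi), mul_one,
        MvPolynomial.smul_monomial, MvPolynomial.smul_monomial, smul_eq_mul, smul_eq_mul, mul_one,
        nsmul_eq_mul, mul_comm]
    rw [MvPolynomial.mkDerivation_monomial, Finsupp.sum, Finset.sum_congr rfl term_eq,
      ← Finset.sum_smul, smul_comm, MvPolynomial.smul_monomial r, smul_eq_mul, mul_one, ← hd,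
      Finsupp.weight_apply, map_finsuppSum, Finsupp.sum]
    simp only [map_nsmul]

end WeightedDerivation

section Sl2

lemma exists_nat_of_pow_toEnd_eq_zero {R L M : Type*} [CommRing R] [IsDomain R] [CharZero R]
    [LieRing L] [LieAlgebra R L] [AddCommGroup M] [Module R M] [Module.IsTorsionFree R M]
    [LieRingModule L M] [LieModule R L M] {h e f : L} {t : IsSl2Triple h e f} {v : M} {μ : R}
    (hv : t.HasPrimitiveVectorWith v μ) {N : ℕ} (hN : (LieModule.toEnd R L M f ^ N) v = 0) :
    ∃ n : ℕ, μ = n := by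
  obtain ⟨n, hn, hn'⟩ := Nat.exists_not_and_succ_of_not_zero_of_exists
    (p := fun n ↦ (LieModule.toEnd R L M f ^ n) v = 0) hv.ne_zero ⟨N, hN⟩
  have h := hv.lie_e_pow_succ_toEnd_f n
  rw [hn', lie_zero, eq_comm, smul_eq_zero_iff_left hn, mul_eq_zero, sub_eq_zero] at h
  exact ⟨n, h.resolve_left (Nat.cast_add_one_ne_zero n)⟩

end Sl2

section SymmetricPower

variable (R : Type*) [CommRing R] (b : ℕ)

/-- The operator `e = ∑ (b - i) xᵢ₊₁ ∂ᵢ` of `sl₂` on polynomials in `x₀, …, x_b`. The index `i + 1`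
wraps around in `Fin (b + 1)` only at `i = b`, where its coefficient vanishes. -/
noncomputable def raising :
    Derivation R (MvPolynomial (Fin (b + 1)) R) (MvPolynomial (Fin (b + 1)) R) :=
  MvPolynomial.mkDerivation R fun i ↦ ((b : R) - (i : ℕ)) • MvPolynomial.X (i + 1)

/-- The operator `f = ∑ i xᵢ₋₁ ∂ᵢ` of `sl₂` on polynomials in `x₀, …, x_b`. The index `i - 1` wraps
around in `Fin (b + 1)` only at `i = 0`, where its coefficient vanishes. -/
noncomputable def lowering :
    Derivation R (MvPolynomial (Fin (b + 1)) R) (MvPolynomial (Fin (b + 1)) R) :=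
  MvPolynomial.mkDerivation R fun i ↦ ((i : ℕ) : R) • MvPolynomial.X (i - 1)

/-- The operator `h = ∑ (2i - b) xᵢ ∂ᵢ` of `sl₂` on polynomials in `x₀, …, x_b`, which acts on a
polynomial of degree `a` and `q`-exponent `w` as the scalar `2w - ab`. -/
noncomputable def cartan :
    Derivation R (MvPolynomial (Fin (b + 1)) R) (MvPolynomial (Fin (b + 1)) R) :=
  MvPolynomial.mkDerivation R fun i ↦ (2 * ((i : ℕ) : R) - b) • MvPolynomial.X i

/-- The weight whose value on a monomial is the pair of its degree and its `q`-exponent `∑ i * dᵢ`.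
It is integer-valued so that `lowering` has degree `(0, -1)`. -/
def bidegree (i : Fin (b + 1)) : ℤ × ℤ := (1, (i : ℕ))

variable {b}

lemma sub_mul_val_add_one (i : Fin (b + 1)) :
    ((b : R) - (i : ℕ)) * ((i + 1 : Fin (b + 1)) : ℕ) = (b - (i : ℕ)) * ((i : ℕ) + 1) := by
  rw [Fin.val_add_one]
  split_ifs with hi
  · simp [hi]
  · push_cast; rfl

lemma val_mul_val_sub_one (i : Fin (b + 1)) :
    ((i : ℕ) : R) * ((i - 1 : Fin (b + 1)) : ℕ) = (i : ℕ) * ((i : ℕ) - 1) := by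
  rw [Fin.coe_sub_one]
  split_ifs with hi
  · simp [hi]
  · rw [Nat.cast_pred (Fin.pos_iff_ne_zero.2 hi)]

lemma isSl2Triple_cartan_raising_lowering [CharZero R] (hb : 0 < b) :
    IsSl2Triple (cartan R b) (raising R b) (lowering R b) where
  h_ne_zero h := by
    have coeff_X_zero := congrArg (MvPolynomial.coeff (Finsupp.single 0 1))
      (DFunLike.congr_fun h (MvPolynomial.X 0))
    exact hb.ne' (by simpa [cartan] using coeff_X_zero)
  lie_e_f := by
    refine MvPolynomial.derivation_ext fun i ↦ ?_
    simp only [Derivation.commutator_apply, raising, lowering, cartan,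
      MvPolynomial.mkDerivation_X, Derivation.map_smul, smul_smul, ← sub_smul,
      sub_add_cancel, add_sub_cancel_right]
    congr 1
    linear_combination -val_mul_val_sub_one R i - sub_mul_val_add_one R i
  lie_h_e_nsmul := by
    refine MvPolynomial.derivation_ext fun i ↦ ?_
    simp only [Derivation.commutator_apply, raising, cartan, Derivation.smul_apply,
      MvPolynomial.mkDerivation_X, Derivation.map_smul, smul_smul, ← sub_smul,
      ← Nat.cast_smul_eq_nsmul R]
    congr 1
    push_cast
    linear_combination 2 * sub_mul_val_add_one R i
  lie_h_f_nsmul := by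
    refine MvPolynomial.derivation_ext fun i ↦ ?_
    simp only [Derivation.commutator_apply, lowering, cartan, Derivation.smul_apply,
      MvPolynomial.mkDerivation_X, Derivation.map_smul, smul_smul, ← sub_smul,
      ← Nat.cast_smul_eq_nsmul R, ← neg_smul]
    congr 1
    push_cast
    linear_combination 2 * val_mul_val_sub_one R i

lemma isWeightedHomogeneous_raising {m : ℤ × ℤ} {φ : MvPolynomial (Fin (b + 1)) R}
    (hφ : φ.IsWeightedHomogeneous (bidegree b) m) :
    (raising R b φ).IsWeightedHomogeneous (bidegree b) (m + (0, 1)) := by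
  refine isWeightedHomogeneous_mkDerivation (fun i ↦ ?_) hφ
  obtain rfl | hi := eq_or_ne i (Fin.last b)
  · simpa using MvPolynomial.isWeightedHomogeneous_zero R _ _
  · have bidegree_succ : bidegree b (i + 1) = bidegree b i + (0, 1) := by
      simp [bidegree, Fin.val_add_one, hi]
    rw [← bidegree_succ]
    exact (MvPolynomial.weightedHomogeneousSubmodule R _ _).smul_mem _
      (MvPolynomial.isWeightedHomogeneous_X R _ _)

lemma isWeightedHomogeneous_lowering {m : ℤ × ℤ} {φ : MvPolynomial (Fin (b + 1)) R}
    (hφ : φ.IsWeightedHomogeneous (bidegree b) m) :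
    (lowering R b φ).IsWeightedHomogeneous (bidegree b) (m + (0, -1)) := by
  refine isWeightedHomogeneous_mkDerivation (fun i ↦ ?_) hφ
  obtain rfl | hi := eq_or_ne i 0
  · simpa using MvPolynomial.isWeightedHomogeneous_zero R _ _
  · have bidegree_pred : bidegree b (i - 1) = bidegree b i + (0, -1) := by
      refine Prod.ext (by simp [bidegree]) ?_
      rw [bidegree, bidegree, Fin.coe_sub_one, if_neg hi,
        Nat.cast_pred (Fin.pos_iff_ne_zero.2 hi), Prod.mk_add_mk, add_zero, sub_eq_add_neg]
    rw [← bidegree_pred]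
    exact (MvPolynomial.weightedHomogeneousSubmodule R _ _).smul_mem _
      (MvPolynomial.isWeightedHomogeneous_X R _ _)

variable {R} in
lemma cartan_apply_eq_smul {m : ℤ × ℤ} {φ : MvPolynomial (Fin (b + 1)) R}
    (hφ : φ.IsWeightedHomogeneous (bidegree b) m) :
    cartan R b φ = (2 * (m.2 : R) - b * m.1) • φ := by
  let ℓ : ℤ × ℤ →+ R :=
    { toFun := fun m ↦ 2 * (m.2 : R) - b * m.1
      map_zero' := by simp
      map_add' := fun m n ↦ by push_cast [Prod.fst_add, Prod.snd_add]; ring }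
  simpa [cartan, ℓ, bidegree] using mkDerivation_smul_X_eq_smul ℓ hφ

lemma weight_bidegree (d : Fin (b + 1) →₀ ℕ) :
    Finsupp.weight (bidegree b) d = (((∑ i, d i : ℕ) : ℤ), ((∑ i, d i * (i : ℕ) : ℕ) : ℤ)) := by
  ext <;> simp [Finsupp.weight_eq_sum, bidegree, Prod.fst_sum, Prod.snd_sum]

lemma pow_toEnd_lowering_eq_zero {a : ℤ} {w : ℕ} {φ : MvPolynomial (Fin (b + 1)) R}
    (hφ : φ.IsWeightedHomogeneous (bidegree b) (a, (w : ℤ))) :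
    (LieModule.toEnd R _ _ (lowering R b) ^ (w + 1)) φ = 0 := by
  have homogeneous (n : ℕ) : ((LieModule.toEnd R _ _ (lowering R b) ^ n) φ).IsWeightedHomogeneous
      (bidegree b) (a, (w : ℤ) - n) := by
    induction n with
    | zero => simpa using hφ
    | succ n ih =>
      rw [pow_succ']
      simpa [← sub_eq_add_neg, sub_sub] using isWeightedHomogeneous_lowering R ih
  refine (homogeneous (w + 1)).eq_zero_of_no_monomials fun d hd ↦ ?_
  have exponent_eq := congrArg Prod.snd hd
  simp only [weight_bidegree] at exponent_eq
  omega

theorem eq_zero_of_raising_eq_zero [IsDomain R] [CharZero R] {a w : ℕ} (hw : 2 * w < a * b)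
    {φ : MvPolynomial (Fin (b + 1)) R}
    (hφ : φ.IsWeightedHomogeneous (bidegree b) ((a : ℤ), (w : ℤ)))
    (h : raising R b φ = 0) : φ = 0 := by
  by_contra hne
  have hb : 0 < b := Nat.pos_of_ne_zero fun hb ↦ by simp [hb] at hw
  have primitive : (isSl2Triple_cartan_raising_lowering R hb).HasPrimitiveVectorWith φ
      (2 * (w : R) - b * a) :=
    ⟨hne, by simpa using cartan_apply_eq_smul hφ, h⟩
  obtain ⟨n, hn⟩ := exists_nat_of_pow_toEnd_eq_zero primitive (pow_toEnd_lowering_eq_zero R hφ)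
  have weight_eq : 2 * w = n + b * a := by exact_mod_cast sub_eq_iff_eq_add.1 hn
  rw [mul_comm] at hw
  lia

end SymmetricPower

section Unimodality

/-- The bihomogeneous component of `R[x₀, …, x_b]` of degree `a` and `q`-exponent `w`, i.e. a weight
space of the `sl₂`-module `Sym^a(Sym^b)`. -/
abbrev weightSpace (R : Type*) [CommRing R] (a b w : ℕ) :
    Submodule R (MvPolynomial (Fin (b + 1)) R) :=
  MvPolynomial.weightedHomogeneousSubmodule R (bidegree b) ((a : ℤ), (w : ℤ))

/-- The exponents `d` of the monomials `x₀ ^ d₀ ⋯ x_b ^ d_b` of degree `a` and `q`-exponent `w`,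
which index a basis of `weightSpace R a b w` for every `R`. -/
def weightExponents (a b w : ℕ) : Finset (Fin (b + 1) →₀ ℕ) :=
  {d ∈ Finset.univ.finsuppAntidiag a | ∑ i, d i * (i : ℕ) = w}

lemma setOf_weight_bidegree_eq (a b w : ℕ) :
    {d | Finsupp.weight (bidegree b) d = ((a : ℤ), (w : ℤ))} =
      (weightExponents a b w : Set (Fin (b + 1) →₀ ℕ)) := by
  ext d
  simp only [weightExponents, weight_bidegree, Set.mem_ofPred_eq, Prod.mk.injEq, Nat.cast_inj,
    Finset.coe_filter, Finset.mem_finsuppAntidiag, Finset.subset_univ, and_true]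

lemma coeff_qBinom (a b w : ℕ) :
    (qBinom a b).coeff w = (weightExponents a b w).card := by
  simp [qBinom, weightExponents, coeff_X_pow, eq_comm]

lemma coeff_qBinom_nonneg (a b w : ℕ) : 0 ≤ (qBinom a b).coeff w := by
  rw [coeff_qBinom]
  exact Int.natCast_nonneg _

variable (R : Type*) [CommRing R]

/-- The basis of monomials of a weight space, used to compute its rank. -/
noncomputable def weightSpaceBasis (a b w : ℕ) :
    Module.Basis (weightExponents a b w) R (weightSpace R a b w) :=
  (MvPolynomial.basisRestrictSupport R _).map (LinearEquiv.ofEq _ _ (by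
    rw [weightSpace, MvPolynomial.weightedHomogeneousSubmodule_eq_finsupp_supported,
      setOf_weight_bidegree_eq]; rfl))

instance (a b w : ℕ) : Module.Finite R (weightSpace R a b w) :=
  .of_basis (weightSpaceBasis R a b w)

theorem coeff_qBinom_eq_finrank [Nontrivial R] (a b w : ℕ) :
    (qBinom a b).coeff w = Module.finrank R (weightSpace R a b w) := by
  rw [Module.finrank_eq_card_basis (weightSpaceBasis R a b w), coeff_qBinom, Fintype.card_coe]

theorem coeff_qBinom_le_coeff_succ {a b w : ℕ} (hw : 2 * w < a * b) :
    (qBinom a b).coeff w ≤ (qBinom a b).coeff (w + 1) := by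
  rw [coeff_qBinom_eq_finrank ℚ, coeff_qBinom_eq_finrank ℚ, Nat.cast_le]
  have maps (φ) (hφ : φ ∈ weightSpace ℚ a b w) :
      (raising ℚ b).toLinearMap φ ∈ weightSpace ℚ a b (w + 1) := by
    simpa using isWeightedHomogeneous_raising ℚ hφ
  refine LinearMap.finrank_le_finrank_of_injective (f := (raising ℚ b).toLinearMap.restrict maps) ?_
  rw [← LinearMap.ker_eq_bot, LinearMap.ker_eq_bot']
  intro φ hφ
  exact Subtype.ext (eq_zero_of_raising_eq_zero ℚ hw φ.2 (congrArg Subtype.val hφ))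

theorem monotoneOn_coeff_qBinom (a b : ℕ) :
    MonotoneOn (qBinom a b).coeff (Set.Iic (a * b / 2)) :=
  monotoneOn_of_le_add_one Set.ordConnected_Iic fun w _ _ hw ↦
    coeff_qBinom_le_coeff_succ (by rw [Set.mem_Iic] at hw; omega)

end Unimodality

section Positivity

variable {P G : ℤ[X]} {n d : ℕ}

lemma natDegree_le_of_mul_qInt_eq (hn : 0 < n) (hd : d ≤ n) (h : P * qInt n = qInt d * G) :
    P.natDegree ≤ G.natDegree := by
  obtain rfl | hP := eq_or_ne P 0
  · simp
  have hdeg := congrArg natDegree h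
  rw [natDegree_mul hP (qInt_ne_zero hn), natDegree_qInt] at hdeg
  have := natDegree_mul_le (p := qInt d) (q := G)
  rw [natDegree_qInt] at this
  omega

lemma reverse_eq_of_mul_qInt_eq (hn : 0 < n) (hG : G.reverse = G) (h : P * qInt n = qInt d * G) :
    P.reverse = P := by
  have hrev := congrArg reverse h
  rw [reverse_mul_of_domain, reverse_mul_of_domain, reverse_qInt, reverse_qInt, hG, ← h] at hrev
  exact mul_right_cancel₀ (qInt_ne_zero hn) hrev

lemma coeff_eq_of_mul_qInt_eq (h : P * qInt n = qInt d * G) (i : ℕ) :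
    P.coeff i = (if n ≤ i then P.coeff (i - n) else 0) +
      (G.coeff i - if d ≤ i then G.coeff (i - d) else 0) := by
  have recursion : P = P * X ^ n + (G - G * X ^ d) := by
    linear_combination (1 - X) * h - P * qInt_mul_one_sub_X n + G * qInt_mul_one_sub_X d
  have hi := congrArg (coeff · i) recursion
  simpa only [coeff_add, coeff_sub, coeff_mul_X_pow'] using hi

lemma coeff_nonneg_of_le_of_mul_qInt_eq (hn : 0 < n) (h : P * qInt n = qInt d * G) {N : ℕ}
    (hG : ∀ i, 0 ≤ G.coeff i) (hmono : MonotoneOn G.coeff (Set.Iic N)) {i : ℕ} (hi : i ≤ N) :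
    0 ≤ P.coeff i := by
  induction i using Nat.strong_induction_on with
  | _ i ih =>
    rw [coeff_eq_of_mul_qInt_eq h i]
    refine add_nonneg ?_ (sub_nonneg.2 ?_)
    · split_ifs
      · exact ih _ (by omega) (by omega)
      · exact le_rfl
    · split_ifs
      · exact hmono (Set.mem_Iic.2 (by omega)) hi (Nat.sub_le i d)
      · exact hG i

theorem coeff_nonneg_of_mul_qInt_eq (hn : 0 < n) (hd : d ≤ n) (h : P * qInt n = qInt d * G)
    (hG : ∀ i, 0 ≤ G.coeff i) (hrev : G.reverse = G)
    (hmono : MonotoneOn G.coeff (Set.Iic (G.natDegree / 2))) (i : ℕ) : 0 ≤ P.coeff i := by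
  have lower_half {j : ℕ} (hj : j ≤ G.natDegree / 2) : 0 ≤ P.coeff j :=
    coeff_nonneg_of_le_of_mul_qInt_eq hn h hG hmono hj
  obtain hi | hi := lt_or_ge P.natDegree i
  · rw [coeff_eq_zero_of_natDegree_lt hi]
  obtain hi' | hi' := le_or_gt i (G.natDegree / 2)
  · exact lower_half hi'
  · have := natDegree_le_of_mul_qInt_eq hn hd h
    rw [← reverse_eq_of_mul_qInt_eq hn hrev h, coeff_reverse, revAt_le hi]
    exact lower_half (by omega)

end Positivity

/-- For positive integers `a` and `b`, the expression
`[gcd(a,b)]_q / [a+b]_q * qbinom(a+b, a)` is a polynomial in `q` with non-negative integer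
coefficients: there is a polynomial `P` with non-negative coefficients such that
`P * [a+b]_q * [a]_q! * [b]_q! = [gcd(a,b)]_q * [a+b]_q!`
(i.e. `P = [gcd(a,b)]_q / [a+b]_q * qbinom(a+b, a)`). -/
theorem stmt0 (a b : ℕ) (ha : 0 < a) (hb : 0 < b) :
    ∃ P : Polynomial ℤ, (∀ i, 0 ≤ P.coeff i) ∧
      P * qInt (a + b) * qFact a * qFact b = qInt (Nat.gcd a b) * qFact (a + b) := by
  obtain ⟨P, hP⟩ := qInt_add_dvd_qInt_gcd_mul_qBinom a b
  have quotient : P * qInt (a + b) = qInt (Nat.gcd a b) * qBinom a b := by rw [hP, mul_comm]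
  refine ⟨P, coeff_nonneg_of_mul_qInt_eq (by omega) ?_ quotient (coeff_qBinom_nonneg a b)
    (reverse_qBinom a b) ?_, ?_⟩
  · exact (Nat.gcd_le_left b ha).trans (Nat.le_add_right a b)
  · rw [natDegree_qBinom]
    exact monotoneOn_coeff_qBinom a b
  · rw [quotient, mul_assoc, mul_assoc, ← mul_assoc (qBinom a b), qBinom_mul_qFact_mul_qFact]
end

section
/- For positive integers m and n with n ≥ 2, setting l = 2 in the multichain count gives: the total number of positive m-divisible non-crossing partitions of {1,2,...,mn} equals (1/n) · C((m+1)n - 2, n - 1). -/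
/-- A finpartition of `Fin N` (representing the points `1, …, N` placed in this order around
a circle) is non-crossing if there are no `a < b < c < d` with `a, c` in one block and
`b, d` in a different block. -/
def IsNoncrossing {N : ℕ} (P : Finpartition (Finset.univ : Finset (Fin N))) : Prop :=
  ∀ B ∈ P.parts, ∀ C ∈ P.parts, ∀ a b c d : Fin N,
    a < b → b < c → c < d → a ∈ B → c ∈ B → b ∈ C → d ∈ C → B = C

/-!
The Łukasiewicz word of a non-crossing partition of `N` points has as its `j`-th letter the size of
the block whose least element is `j`, and `0` if there is none; subtracting `1` from each letter
gives the steps of a path which stays nonnegative and ends at `0`. The partition is recovered from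
it: the block of `i` begins at the last time `p ≤ i` at which the path is at most as high as right
after step `i`. In particular the first and the last point share a block exactly when the path is
positive strictly between its endpoints.

For `N = m * n` and blocks of size divisible by `m`, drop the last letter, which is `0`, and divide
by `m`: the remaining letters form a word `c` of length `L = m * n - 1` and sum `n` whose steps
`m * c i - 1` add up to `1` and have positive partial sums. By the cycle lemma exactly one of the
`L` rotations of any word of sum `n` has this positivity, so there are
`C(L + n - 1, n) / L = C(L + n - 1, n - 1) / n` such words.
-/

open Finset

section CycleLemma

variable {L : ℕ}

/-- A cyclic word, read from position `0`, has positive prefix sums: the sums of its first `q`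
letters are positive for `0 < q ≤ L`. -/
def PrefixSumsPos (f : ZMod L → ℤ) : Prop :=
  ∀ q, 0 < q → q ≤ L → 0 < ∑ j ∈ range q, f j

-- Take the last minimum of `S` on `[0, L)`; it minimizes `(L + 1) * S i - i`.
theorem exists_forall_lt_add_of_add_eq_add_one (hL : 0 < L) {S : ℕ → ℤ}
    (hS : ∀ i, S (i + L) = S i + 1) : ∃ k < L, ∀ q, 0 < q → q ≤ L → S k < S (k + q) := by
  obtain ⟨k, hk, hmin⟩ := exists_min_image (range L) (fun i ↦ (L + 1) * S i - i)
    ⟨0, mem_range.mpr hL⟩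
  rw [mem_range] at hk
  refine ⟨k, hk, fun q hq hqL ↦ ?_⟩
  by_contra! hle
  obtain hlt | hge := lt_or_ge (k + q) L
  · have := hmin (k + q) (mem_range.mpr hlt)
    push_cast at this
    nlinarith
  · obtain ⟨r, hr⟩ := Nat.exists_eq_add_of_le' hge
    have := hmin r (mem_range.mpr (by lia))
    rw [hr, hS] at hle
    nlinarith [show (r : ℤ) ≤ k by lia]

variable [NeZero L]

theorem sum_range_natCast_zmod {M : Type*} [AddCommMonoid M] (f : ZMod L → M) :
    ∑ j ∈ range L, f j = ∑ i, f i :=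
  sum_nbij' (↑) ZMod.val (by simp) (by simp [ZMod.val_lt])
    (fun _ hj ↦ ZMod.val_natCast_of_lt (mem_range.mp hj)) (by simp) (by simp)

theorem sum_range_add_natCast_zmod {M : Type*} [AddCommMonoid M] (f : ZMod L → M) (k : ZMod L) :
    ∑ j ∈ range L, f (k + j) = ∑ i, f i := by
  rw [sum_range_natCast_zmod (fun i ↦ f (k + i))]
  exact Equiv.sum_comp (Equiv.addLeft k) f

theorem exists_prefixSumsPos_add {f : ZMod L → ℤ} (hf : ∑ i, f i = 1) :
    ∃ k, PrefixSumsPos fun i ↦ f (k + i) := by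
  have prefix_add (k q : ℕ) : ∑ j ∈ range (k + q), f j
      = ∑ j ∈ range k, f j + ∑ j ∈ range q, f (k + j) := by
    simp [sum_range_add]
  obtain ⟨k, -, hk⟩ := exists_forall_lt_add_of_add_eq_add_one (NeZero.pos L)
    (S := fun q ↦ ∑ j ∈ range q, f j)
    fun i ↦ by rw [prefix_add, sum_range_add_natCast_zmod, hf]
  refine ⟨k, fun q hq hqL ↦ ?_⟩
  have := hk q hq hqL
  rw [prefix_add] at this
  lia

-- The arcs from `k` to `l` and from `l` to `k` together carry the whole sum `1`.
theorem eq_of_prefixSumsPos_add {f : ZMod L → ℤ} (hf : ∑ i, f i = 1) {k l : ZMod L}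
    (hk : PrefixSumsPos fun i ↦ f (k + i)) (hl : PrefixSumsPos fun i ↦ f (l + i)) : k = l := by
  by_contra hkl
  have hd : 0 < (l - k).val := by
    rw [Nat.pos_iff_ne_zero, Ne, ZMod.val_eq_zero, sub_eq_zero]
    exact Ne.symm hkl
  have hdL : (l - k).val < L := ZMod.val_lt _
  have second_arc (j : ℕ) : f (k + ((l - k).val + j : ℕ)) = f (l + j) := by
    simp [← add_assoc]
  have arcs : ∑ j ∈ range (l - k).val, f (k + j) + ∑ j ∈ range (L - (l - k).val), f (l + j)
      = 1 := by
    simp only [← second_arc]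
    rw [← sum_range_add (fun j ↦ f (k + (j : ℕ))), Nat.add_sub_cancel' hdL.le,
      sum_range_add_natCast_zmod, hf]
  have := hk _ hd hdL.le
  have := hl (L - (l - k).val) (by lia) (by lia)
  lia

theorem existsUnique_prefixSumsPos_add {f : ZMod L → ℤ} (hf : ∑ i, f i = 1) :
    ∃! k, PrefixSumsPos fun i ↦ f (k + i) :=
  existsUnique_of_exists_of_unique (exists_prefixSumsPos_add hf)
    fun _ _ ↦ eq_of_prefixSumsPos_add hf

open Classical in
theorem mul_card_filter_prefixSumsPos {α : Type*} {W : Finset (ZMod L → α)} {g : α → ℤ}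
    (hW : ∀ c ∈ W, ∀ k, (fun i ↦ c (k + i)) ∈ W) (hg : ∀ c ∈ W, ∑ i, g (c i) = 1) :
    L * #{c ∈ W | PrefixSumsPos fun i ↦ g (c i)} = #W := by
  have card_shift (k : ZMod L) : #{c ∈ W | PrefixSumsPos fun i ↦ g (c (k + i))}
      = #{c ∈ W | PrefixSumsPos fun i ↦ g (c i)} :=
    card_nbij' (fun c i ↦ c (k + i)) (fun c i ↦ c (-k + i))
      (fun c hc ↦ by
        rw [mem_coe, mem_filter] at hc ⊢
        exact ⟨hW c hc.1 k, hc.2⟩)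
      (fun c hc ↦ by
        rw [mem_coe, mem_filter] at hc ⊢
        exact ⟨hW c hc.1 (-k), by simpa only [neg_add_cancel_left] using hc.2⟩)
      (fun c _ ↦ by simp only [add_neg_cancel_left])
      (fun c _ ↦ by simp only [neg_add_cancel_left])
  have card_good_shifts (c) (hc : c ∈ W) :
      #{k : ZMod L | PrefixSumsPos fun i ↦ g (c (k + i))} = 1 :=
    card_eq_one_iff_existsUnique.mpr <| by
      simpa using existsUnique_prefixSumsPos_add (f := fun i ↦ g (c i)) (hg c hc)
  calc L * #{c ∈ W | PrefixSumsPos fun i ↦ g (c i)}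
      = ∑ k : ZMod L, #{c ∈ W | PrefixSumsPos fun i ↦ g (c (k + i))} := by
        simp [card_shift, ZMod.card]
    _ = ∑ c ∈ W, #{k : ZMod L | PrefixSumsPos fun i ↦ g (c (k + i))} := by
        simp only [card_filter, sum_comm (s := W)]
    _ = #W := by simp [sum_congr rfl card_good_shifts]

theorem card_piAntidiag_univ {ι : Type*} [Fintype ι] [DecidableEq ι] (n : ℕ) :
    #(piAntidiag (univ : Finset ι) n) = (Fintype.card ι + n - 1).choose n := by
  rw [← map_sym_eq_piAntidiag, card_map, sym_univ, card_univ, Sym.card_sym_eq_choose]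

theorem add_one_mul_choose_add (l k : ℕ) :
    (k + 1) * (l + k).choose (k + 1) = l * (l + k).choose k := by
  rw [mul_comm, Nat.choose_succ_right_eq, Nat.add_sub_cancel, mul_comm]

theorem mul_ncard_prefixSumsPos {m n : ℕ} (hmn : m * n = L + 1) :
    n * {c : ZMod L → ℕ | ∑ i, c i = n ∧ PrefixSumsPos fun i ↦ (m * c i - 1 : ℤ)}.ncard
      = (L + n - 1).choose (n - 1) := by
  classical
  set W := piAntidiag (univ : Finset (ZMod L)) n with hW
  have mem_W (c) : c ∈ W ↔ ∑ i, c i = n := by simp [hW]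
  have shift_mem : ∀ c ∈ W, ∀ k, (fun i ↦ c (k + i)) ∈ W := fun c hc k ↦ by
    rw [mem_W] at hc ⊢
    exact (Equiv.sum_comp (Equiv.addLeft k) c).trans hc
  have sum_eq_one : ∀ c ∈ W, ∑ i, (m * c i - 1 : ℤ) = 1 := fun c hc ↦ by
    have : (m * n : ℤ) = L + 1 := by exact_mod_cast hmn
    rw [sum_sub_distrib, ← mul_sum, ← Nat.cast_sum, (mem_W c).mp hc, this]
    simp [ZMod.card]
  have cycle := mul_card_filter_prefixSumsPos (g := fun a : ℕ ↦ (m * a - 1 : ℤ))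
    shift_mem sum_eq_one
  rw [hW, card_piAntidiag_univ, ZMod.card, ← Set.ncard_coe_finset, coe_filter] at cycle
  simp only [← hW, mem_W] at cycle
  obtain ⟨k, rfl⟩ : ∃ k, n = k + 1 := Nat.exists_eq_succ_of_ne_zero (by rintro rfl; simp at hmn)
  apply Nat.eq_of_mul_eq_mul_left (NeZero.pos L)
  rw [mul_left_comm, cycle]
  exact add_one_mul_choose_add L k

end CycleLemma

section Path

/-- The height after `q` steps of the Łukasiewicz path of `w`, whose `j`-th step is `w j - 1`. -/
def pathHeight (w : ℕ → ℕ) (q : ℕ) : ℤ :=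
  ∑ j ∈ range q, (w j - 1 : ℤ)

/-- The last time `p ≤ i` at which `h` is at most at the level `h (i + 1)` (and `0` if there is
none). For the Łukasiewicz path of a non-crossing partition it is the least element of the block
of `i`. -/
def opener (h : ℕ → ℤ) (i : ℕ) : ℕ :=
  Nat.findGreatest (fun p ↦ h p ≤ h (i + 1)) i

/-- The words `w 0, …, w (N - 1)`, continued by zeros, whose Łukasiewicz path stays nonnegative
and ends at `0`. -/
structure IsLukasiewicz (N : ℕ) (w : ℕ → ℕ) : Prop where
  pathHeight_nonneg : ∀ q ≤ N, 0 ≤ pathHeight w q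
  pathHeight_eq_zero : pathHeight w N = 0
  eq_zero_of_le : ∀ j, N ≤ j → w j = 0

variable {h : ℕ → ℤ} {w : ℕ → ℕ} {N i j p : ℕ}

theorem pathHeight_zero (w : ℕ → ℕ) : pathHeight w 0 = 0 :=
  sum_range_zero _

theorem pathHeight_succ (w : ℕ → ℕ) (q : ℕ) :
    pathHeight w (q + 1) = pathHeight w q + (w q - 1) :=
  sum_range_succ _ _

theorem sub_one_le_pathHeight_succ (w : ℕ → ℕ) (q : ℕ) :
    pathHeight w q - 1 ≤ pathHeight w (q + 1) := by
  rw [pathHeight_succ]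
  lia

theorem opener_le (h : ℕ → ℤ) (i : ℕ) : opener h i ≤ i :=
  Nat.findGreatest_le i

theorem opener_eq_iff (h0 : h 0 ≤ h (i + 1)) :
    opener h i = p ↔ p ≤ i ∧ h p ≤ h (i + 1) ∧ ∀ q, p < q → q ≤ i → h (i + 1) < h q := by
  rw [opener, Nat.findGreatest_eq_iff]
  simp only [not_le]
  grind

theorem apply_opener_le (h0 : h 0 ≤ h (i + 1)) : h (opener h i) ≤ h (i + 1) :=
  ((opener_eq_iff h0).mp rfl).2.1

theorem lt_of_opener_lt {q : ℕ} (hq : opener h i < q) (hqi : q ≤ i) : h (i + 1) < h q :=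
  not_le.mp (Nat.findGreatest_is_greatest hq hqi)

theorem opener_opener (h0 : h 0 ≤ h (i + 1)) (h0' : h 0 ≤ h (opener h i + 1)) :
    opener h (opener h i) = opener h i := by
  refine (opener_eq_iff h0').mpr ⟨le_rfl, ?_, fun q _ _ ↦ by lia⟩
  obtain heq | hlt := (opener_le h i).eq_or_lt
  · simpa only [heq] using apply_opener_le h0
  · exact (apply_opener_le h0).trans (lt_of_opener_lt (Nat.lt_succ_self _) hlt).le

theorem opener_le_opener (h0 : h 0 ≤ h (j + 1)) (hji : opener h j ≤ i) (hij : i ≤ j) :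
    opener h j ≤ opener h i := by
  by_contra! hlt
  obtain rfl | hij := hij.eq_or_lt
  · exact hlt.false
  · have := lt_of_opener_lt hlt hji
    have := apply_opener_le h0
    have := lt_of_opener_lt (h := h) (Nat.lt_succ_of_le hji) hij
    lia

theorem eq_of_opener_eq (hop : opener h i = opener h j) (hij : h (i + 1) = h (j + 1)) :
    i = j := by
  wlog hlt : i < j generalizing i j
  · obtain heq | hgt := (not_lt.mp hlt).eq_or_lt
    · exact heq.symm
    · exact (this hop.symm hij.symm hgt).symm
  have : opener h j < i + 1 := hop ▸ Nat.lt_succ_of_le (opener_le h i)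
  exact absurd hij (lt_of_opener_lt this hlt).ne'

theorem exists_first_descent (hstep : ∀ i, h i - 1 ≤ h (i + 1)) {v : ℤ} (hp : p < N)
    (hv : v ≤ h (p + 1)) (hN : h N ≤ v) :
    ∃ i, p ≤ i ∧ i < N ∧ h (i + 1) = v ∧ ∀ q, p < q → q ≤ i → v < h q := by
  classical
  have hex : ∃ i, p ≤ i ∧ h (i + 1) ≤ v :=
    ⟨N - 1, by lia, by rwa [Nat.sub_add_cancel (by lia)]⟩
  obtain ⟨hpi, hiv⟩ := Nat.find_spec hex
  have hiN : Nat.find hex ≤ N - 1 :=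
    Nat.find_min' hex ⟨by lia, by rwa [Nat.sub_add_cancel (by lia)]⟩
  have above : ∀ q, p < q → q ≤ Nat.find hex → v < h q := fun q hpq hq ↦ by
    have := Nat.find_min hex (m := q - 1) (by lia)
    rw [Nat.sub_add_cancel (by lia)] at this
    grind
  refine ⟨Nat.find hex, hpi, by lia, hiv.antisymm ?_, above⟩
  obtain heq | hlt := hpi.eq_or_lt
  · rwa [← heq]
  · have := above _ hlt le_rfl
    have := hstep (Nat.find hex)
    lia

theorem IsLukasiewicz.pathHeight_zero_le (hw : IsLukasiewicz N w) {q : ℕ} (hq : q ≤ N) :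
    pathHeight w 0 ≤ pathHeight w q :=
  (pathHeight_zero w).trans_le (hw.pathHeight_nonneg q hq)

-- The steps `i` opened at `p` end at the levels `pathHeight w (i + 1)` from `pathHeight w p` to
-- `pathHeight w (p + 1)`, once each.
theorem IsLukasiewicz.card_filter_opener_eq (hw : IsLukasiewicz N w) (hp : p < N) :
    #{i : Fin N | opener (pathHeight w) i = p} = w p := by
  have h0 {q : ℕ} (hq : q < N) : pathHeight w 0 ≤ pathHeight w (q + 1) :=
    hw.pathHeight_zero_le hq
  have card_levels : #(Icc (pathHeight w p) (pathHeight w (p + 1))) = w p := by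
    rw [Int.card_Icc, pathHeight_succ]
    lia
  rw [← card_levels]
  refine card_nbij (fun i : Fin N ↦ pathHeight w (i + 1)) ?_ ?_ ?_
  · intro i hi
    simp only [coe_filter_univ, Set.mem_ofPred_eq, coe_Icc] at hi ⊢
    obtain ⟨hpi, hlow, habove⟩ := (opener_eq_iff (h0 i.isLt)).mp hi
    refine ⟨hlow, ?_⟩
    obtain rfl | hlt := hpi.eq_or_lt
    · rfl
    · exact (habove (p + 1) (by lia) hlt).le
  · intro i hi j hj hij
    simp only [coe_filter_univ, Set.mem_ofPred_eq] at hi hj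
    exact Fin.ext (eq_of_opener_eq (hi.trans hj.symm) hij)
  · intro v hv
    rw [coe_Icc, Set.mem_Icc] at hv
    have hNv : pathHeight w N ≤ v :=
      hw.pathHeight_eq_zero.trans_le ((hw.pathHeight_nonneg p hp.le).trans hv.1)
    obtain ⟨i, hpi, hiN, rfl, habove⟩ :=
      exists_first_descent (sub_one_le_pathHeight_succ w) hp hv.2 hNv
    refine ⟨⟨i, hiN⟩, ?_, rfl⟩
    simpa using (opener_eq_iff (h0 hiN)).mpr ⟨hpi, hv.1, habove⟩

end Path

section BlockMin

variable {N : ℕ}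

/-- The least element of the block of `x`. -/
def blockMin (P : Finpartition (univ : Finset (Fin N))) (x : Fin N) : Fin N :=
  (P.part x).min' (by simp)

/-- The size of the block whose least element is `j`, and `0` if there is no such block. -/
def openedSize (P : Finpartition (univ : Finset (Fin N))) (j : ℕ) : ℕ :=
  #{x | (blockMin P x : ℕ) = j}

/-- The points from `q` on whose block has begun before `q`. -/
def pending (P : Finpartition (univ : Finset (Fin N))) (q : ℕ) : Finset (Fin N) :=
  {x | q ≤ (x : ℕ) ∧ (blockMin P x : ℕ) < q}

variable {P : Finpartition (univ : Finset (Fin N))} {x y : Fin N} {m q : ℕ}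

theorem blockMin_mem_part (P : Finpartition (univ : Finset (Fin N))) (x : Fin N) :
    blockMin P x ∈ P.part x :=
  min'_mem _ _

theorem blockMin_le_of_mem_part (h : y ∈ P.part x) : blockMin P x ≤ y :=
  min'_le _ _ h

theorem blockMin_le (P : Finpartition (univ : Finset (Fin N))) (x : Fin N) : blockMin P x ≤ x :=
  blockMin_le_of_mem_part (by simp)

theorem part_blockMin (P : Finpartition (univ : Finset (Fin N))) (x : Fin N) :
    P.part (blockMin P x) = P.part x :=
  P.part_eq_of_mem (by simp) (blockMin_mem_part P x)

theorem blockMin_eq_blockMin_iff : blockMin P x = blockMin P y ↔ P.part x = P.part y := by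
  refine ⟨fun h ↦ ?_, fun h ↦ by simp only [blockMin, h]⟩
  rw [← part_blockMin P x, h, part_blockMin]

theorem mem_part_iff_blockMin_eq : y ∈ P.part x ↔ blockMin P y = blockMin P x := by
  rw [blockMin_eq_blockMin_iff, P.mem_part_iff_part_eq_part (by simp) (by simp)]

theorem blockMin_blockMin (P : Finpartition (univ : Finset (Fin N))) (x : Fin N) :
    blockMin P (blockMin P x) = blockMin P x :=
  blockMin_eq_blockMin_iff.mpr (part_blockMin P x)

theorem blockMin_injective :
    Function.Injective (blockMin : Finpartition (univ : Finset (Fin N)) → Fin N → Fin N) := by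
  intro P Q h
  have part_eq (x : Fin N) : P.part x = Q.part x := by
    ext y
    rw [mem_part_iff_blockMin_eq, mem_part_iff_blockMin_eq, h]
  have mem_parts_iff (R : Finpartition (univ : Finset (Fin N))) (B : Finset (Fin N)) :
      B ∈ R.parts ↔ ∃ x, R.part x = B :=
    ⟨fun hB ↦ by simpa using R.part_surjOn hB, by rintro ⟨x, rfl⟩; simp⟩
  ext B
  simp only [mem_parts_iff, part_eq]

theorem exists_blockMin_eq {f : Fin N → Fin N} (hle : ∀ x, f x ≤ x) (hf : ∀ x, f (f x) = f x) :
    ∃ P, blockMin P = f := by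
  classical
  let P := Finpartition.ofSetoid (Setoid.ker f)
  have mem_part_iff (x y : Fin N) : y ∈ P.part x ↔ f x = f y :=
    Finpartition.mem_part_ofSetoid_iff_rel
  refine ⟨P, funext fun x ↦ le_antisymm ?_ ?_⟩
  · exact blockMin_le_of_mem_part ((mem_part_iff x _).mpr (hf x).symm)
  · rw [(mem_part_iff x _).mp (blockMin_mem_part P x)]
    exact hle _

theorem isNoncrossing_iff_blockMin_le_blockMin :
    IsNoncrossing P ↔ ∀ x y, blockMin P y ≤ x → x ≤ y → blockMin P y ≤ blockMin P x := by
  constructor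
  · intro hP x y hyx hxy
    by_contra! hlt
    have hne : blockMin P x ≠ blockMin P y := hlt.ne
    have hyx : blockMin P y < x :=
      hyx.lt_of_ne fun h ↦ hne (by rw [← h, blockMin_blockMin])
    have hxy : x < y := hxy.lt_of_ne fun h ↦ hne (by rw [h])
    exact hne <| blockMin_eq_blockMin_iff.mpr <|
      hP _ (by simp) _ (by simp) _ _ _ _ hlt hyx hxy (blockMin_mem_part P x) (by simp)
        (blockMin_mem_part P y) (by simp)
  · intro h B hB C hC a b c d hab hbc hcd ha hc hb hd
    rw [← P.part_eq_of_mem hB ha] at hc ⊢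
    rw [← P.part_eq_of_mem hC hb] at hd ⊢
    rw [mem_part_iff_blockMin_eq] at hc hd
    rw [← blockMin_eq_blockMin_iff]
    have hca : blockMin P c ≤ blockMin P b := h b c (by grind [blockMin_le P a]) hbc.le
    have hdb : blockMin P d ≤ blockMin P c := h c d (by grind [blockMin_le P b]) hcd.le
    exact le_antisymm (hc ▸ hca) (hc ▸ hd ▸ hdb)

theorem openedSize_blockMin (P : Finpartition (univ : Finset (Fin N))) (x : Fin N) :
    openedSize P (blockMin P x) = #(P.part x) := by
  rw [openedSize]
  congr 1
  ext y
  simp [mem_part_iff_blockMin_eq, Fin.val_inj]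

theorem openedSize_eq_zero {j : ℕ} (h : ∀ x, (blockMin P x : ℕ) ≠ j) : openedSize P j = 0 := by
  simp [openedSize, h]

theorem forall_dvd_openedSize_iff :
    (∀ j, m ∣ openedSize P j) ↔ ∀ B ∈ P.parts, m ∣ #B := by
  constructor
  · intro h B hB
    obtain ⟨x, -, rfl⟩ := P.part_surjOn hB
    exact openedSize_blockMin P x ▸ h _
  · intro h j
    by_cases hj : ∃ x, (blockMin P x : ℕ) = j
    · obtain ⟨x, rfl⟩ := hj
      exact openedSize_blockMin P x ▸ h _ (by simp)
    · rw [openedSize_eq_zero (not_exists.mp hj)]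
      exact dvd_zero m

theorem mem_pending : x ∈ pending P q ↔ q ≤ x ∧ (blockMin P x : ℕ) < q := by
  simp [pending]

theorem pathHeight_openedSize (P : Finpartition (univ : Finset (Fin N))) (hq : q ≤ N) :
    pathHeight (openedSize P) q = #(pending P q) := by
  have sum_opened : ∑ j ∈ range q, openedSize P j = #{x | (blockMin P x : ℕ) < q} := by
    simp only [openedSize, sum_card_fiberwise_eq_card_filter, mem_range]
  have opened_eq : ({x | (blockMin P x : ℕ) < q} : Finset (Fin N))
      = ({x | (x : ℕ) < q} : Finset (Fin N)) ∪ pending P q := by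
    ext x
    have := Fin.le_def.mp (blockMin_le P x)
    simp only [mem_filter_univ, mem_union, mem_pending]
    lia
  have disj : Disjoint ({x | (x : ℕ) < q} : Finset (Fin N)) (pending P q) :=
    disjoint_left.mpr fun x hx hx' ↦ by
      rw [mem_filter_univ] at hx
      rw [mem_pending] at hx'
      lia
  rw [opened_eq, card_union_of_disjoint disj, Fin.card_filter_val_lt, min_eq_right hq]
    at sum_opened
  rw [pathHeight, sum_sub_distrib, ← Nat.cast_sum, sum_opened]
  simp

theorem isLukasiewicz_openedSize (P : Finpartition (univ : Finset (Fin N))) :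
    IsLukasiewicz N (openedSize P) where
  pathHeight_nonneg q hq := by simp [pathHeight_openedSize P hq]
  pathHeight_eq_zero := by
    rw [pathHeight_openedSize P le_rfl, Nat.cast_eq_zero, card_eq_zero]
    exact eq_empty_of_forall_notMem fun x hx ↦ x.isLt.not_ge (mem_pending.mp hx).1
  eq_zero_of_le j hj := openedSize_eq_zero fun x ↦ by lia

end BlockMin

section Bijection

variable {N : ℕ} {P : Finpartition (univ : Finset (Fin N))}

-- On the way from `blockMin P x` to `x + 1` every block that has begun is completed, except those
-- which were pending at `blockMin P x`.
theorem IsNoncrossing.opener_pathHeight_openedSize (hP : IsNoncrossing P) (x : Fin N) :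
    opener (pathHeight (openedSize P)) x = blockMin P x := by
  rw [isNoncrossing_iff_blockMin_le_blockMin] at hP
  have hx := x.isLt
  have hle := Fin.le_def.mp (blockMin_le P x)
  refine (opener_eq_iff ((isLukasiewicz_openedSize P).pathHeight_zero_le hx)).mpr ⟨hle, ?_, ?_⟩
  · rw [pathHeight_openedSize P (by lia), pathHeight_openedSize P (by lia), Nat.cast_le]
    refine card_le_card fun y hy ↦ ?_
    rw [mem_pending] at hy ⊢
    have := hP y x (by lia)
    lia
  · intro q hq hqx
    rw [pathHeight_openedSize P (by lia), pathHeight_openedSize P (by lia), Nat.cast_lt]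
    refine card_lt_card ((ssubset_iff_of_subset fun y hy ↦ ?_).mpr ⟨x, ?_, ?_⟩)
    · rw [mem_pending] at hy ⊢
      have := hP x y (by lia) (by lia)
      lia
    · exact mem_pending.mpr ⟨hqx, hq⟩
    · simp [mem_pending]

theorem injOn_openedSize :
    Set.InjOn openedSize {P : Finpartition (univ : Finset (Fin N)) | IsNoncrossing P} := by
  intro P hP Q hQ h
  refine blockMin_injective (funext fun x ↦ Fin.ext ?_)
  rw [← IsNoncrossing.opener_pathHeight_openedSize hP, h,
    IsNoncrossing.opener_pathHeight_openedSize hQ]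

theorem IsLukasiewicz.exists_isNoncrossing_openedSize_eq {w : ℕ → ℕ} (hw : IsLukasiewicz N w) :
    ∃ P : Finpartition (univ : Finset (Fin N)), IsNoncrossing P ∧ openedSize P = w := by
  have h0 (x : Fin N) : pathHeight w 0 ≤ pathHeight w (x + 1) := hw.pathHeight_zero_le x.isLt
  let f (x : Fin N) : Fin N :=
    ⟨opener (pathHeight w) x, (opener_le _ _).trans_lt x.isLt⟩
  obtain ⟨P, hPf⟩ : ∃ P, blockMin P = f :=
    exists_blockMin_eq (fun x ↦ opener_le _ _)
      fun x ↦ Fin.ext (opener_opener (h0 x) (h0 (f x)))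
  refine ⟨P, isNoncrossing_iff_blockMin_le_blockMin.mpr ?_, funext fun j ↦ ?_⟩
  · rw [hPf]
    exact fun x y ↦ opener_le_opener (h0 y)
  · obtain hj | hj := lt_or_ge j N
    · rw [openedSize, ← hw.card_filter_opener_eq hj, hPf]
    · rw [hw.eq_zero_of_le j hj, (isLukasiewicz_openedSize P).eq_zero_of_le j hj]

theorem bijOn_openedSize :
    Set.BijOn openedSize {P : Finpartition (univ : Finset (Fin N)) | IsNoncrossing P}
      {w | IsLukasiewicz N w} :=
  ⟨fun P _ ↦ isLukasiewicz_openedSize P, injOn_openedSize,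
    fun _ hw ↦ hw.exists_isNoncrossing_openedSize_eq⟩

theorem IsNoncrossing.mem_part_iff_pathHeight_pos (hP : IsNoncrossing P) {a b : Fin N}
    (ha : (a : ℕ) = 0) (hb : (b : ℕ) + 1 = N) :
    a ∈ P.part b ↔ ∀ q, 0 < q → q < N → 0 < pathHeight (openedSize P) q := by
  have hluk := isLukasiewicz_openedSize P
  have mem_part_iff : a ∈ P.part b ↔ (blockMin P b : ℕ) = 0 := by
    constructor
    · intro h
      have := Fin.le_def.mp (blockMin_le_of_mem_part h)
      lia
    · intro h
      rw [show a = blockMin P b from Fin.ext (ha.trans h.symm)]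
      exact blockMin_mem_part P b
  rw [mem_part_iff, ← hP.opener_pathHeight_openedSize,
    opener_eq_iff (hluk.pathHeight_zero_le hb.le), hb, hluk.pathHeight_eq_zero, pathHeight_zero]
  simp only [Nat.zero_le, le_refl, true_and]
  exact forall₂_congr fun q _ ↦ imp_congr_left (by lia)

end Bijection

section Divisible

variable {L m n : ℕ}

/-- The word `m * c 0, …, m * c (L - 1), 0, 0, …` obtained from a cyclic word `c`. It records the
block sizes of an `m`-divisible partition of `L + 1` points whose last point is not a singleton
block. -/
def scaledWord (m : ℕ) (c : ZMod L → ℕ) (j : ℕ) : ℕ :=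
  if j < L then m * c j else 0

theorem dvd_scaledWord (m : ℕ) (c : ZMod L → ℕ) (j : ℕ) : m ∣ scaledWord m c j := by
  rw [scaledWord]
  split_ifs
  exacts [dvd_mul_right m _, dvd_zero m]

theorem scaledWord_of_le (m : ℕ) (c : ZMod L → ℕ) {j : ℕ} (hj : L ≤ j) : scaledWord m c j = 0 :=
  if_neg hj.not_gt

theorem scaledWord_val [NeZero L] (m : ℕ) (c : ZMod L → ℕ) (i : ZMod L) :
    scaledWord m c i.val = m * c i := by
  simp [scaledWord, ZMod.val_lt]

theorem exists_scaledWord_eq {w : ℕ → ℕ} (hdvd : ∀ j, m ∣ w j) (hw : ∀ j, L ≤ j → w j = 0) :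
    ∃ c : ZMod L → ℕ, scaledWord m c = w := by
  refine ⟨fun i ↦ w i.val / m, funext fun j ↦ ?_⟩
  obtain hj | hj := lt_or_ge j L
  · rw [scaledWord, if_pos hj, ZMod.val_natCast_of_lt hj, Nat.mul_div_cancel' (hdvd j)]
  · rw [scaledWord_of_le m _ hj, hw j hj]

theorem scaledWord_injective [NeZero L] (hm : 0 < m) :
    Function.Injective (scaledWord m : (ZMod L → ℕ) → ℕ → ℕ) := fun c d h ↦ funext fun i ↦ by
  have := congrFun h i.val
  rw [scaledWord_val, scaledWord_val] at this
  exact Nat.eq_of_mul_eq_mul_left hm this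

theorem pathHeight_scaledWord (m : ℕ) (c : ZMod L → ℕ) {q : ℕ} (hq : q ≤ L) :
    pathHeight (scaledWord m c) q = ∑ j ∈ range q, (m * c j - 1 : ℤ) := by
  refine sum_congr rfl fun j hj ↦ ?_
  rw [scaledWord, if_pos ((mem_range.mp hj).trans_le hq), Nat.cast_mul]

theorem pathHeight_scaledWord_self [NeZero L] (m : ℕ) (c : ZMod L → ℕ) :
    pathHeight (scaledWord m c) L = m * (∑ i, c i : ℕ) - L := by
  rw [pathHeight_scaledWord m c le_rfl, sum_range_natCast_zmod (fun i ↦ (m * c i - 1 : ℤ)),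
    sum_sub_distrib, ← mul_sum]
  simp [ZMod.card]

theorem pathHeight_pos_scaledWord_iff (m : ℕ) (c : ZMod L → ℕ) :
    (∀ q, 0 < q → q < L + 1 → 0 < pathHeight (scaledWord m c) q) ↔
      PrefixSumsPos fun i ↦ (m * c i - 1 : ℤ) :=
  forall₂_congr fun q _ ↦ by
    rw [Nat.lt_succ_iff]
    exact forall_congr' fun hq ↦ by rw [pathHeight_scaledWord m c hq]

theorem isLukasiewicz_scaledWord_iff [NeZero L] (hmn : m * n = L + 1) {c : ZMod L → ℕ}
    (hc : PrefixSumsPos fun i ↦ (m * c i - 1 : ℤ)) :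
    IsLukasiewicz (L + 1) (scaledWord m c) ↔ ∑ i, c i = n := by
  have hm : 0 < m := Nat.pos_of_mul_pos_right (L.succ_pos.trans_eq hmn.symm)
  have hzero : pathHeight (scaledWord m c) (L + 1) = 0 ↔ ∑ i, c i = n := by
    rw [pathHeight_succ, pathHeight_scaledWord_self, scaledWord_of_le m c le_rfl,
      ← Nat.mul_right_inj hm.ne', hmn]
    lia
  refine ⟨fun h ↦ hzero.mp h.pathHeight_eq_zero, fun h ↦ ⟨fun q hq ↦ ?_, hzero.mpr h,
    fun j hj ↦ scaledWord_of_le m c (by lia)⟩⟩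
  obtain rfl | hq0 := q.eq_zero_or_pos
  · exact (pathHeight_zero _).ge
  obtain rfl | hqL := hq.eq_or_lt
  · exact (hzero.mpr h).ge
  · exact ((pathHeight_pos_scaledWord_iff m c).mpr hc q hq0 hqL).le

theorem IsLukasiewicz.eq_zero_of_pathHeight_pos {w : ℕ → ℕ} (hw : IsLukasiewicz (L + 1) w)
    (hL : 0 < pathHeight w L) : w L = 0 := by
  have := hw.pathHeight_eq_zero
  rw [pathHeight_succ] at this
  lia

theorem bijOn_scaledWord [NeZero L] (hmn : m * n = L + 1) :
    Set.BijOn (scaledWord m)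
      {c : ZMod L → ℕ | ∑ i, c i = n ∧ PrefixSumsPos fun i ↦ (m * c i - 1 : ℤ)}
      {w | IsLukasiewicz (L + 1) w ∧ (∀ j, m ∣ w j) ∧
        ∀ q, 0 < q → q < L + 1 → 0 < pathHeight w q} := by
  have hm : 0 < m := Nat.pos_of_mul_pos_right (L.succ_pos.trans_eq hmn.symm)
  refine ⟨fun c ⟨hsum, hpos⟩ ↦ ?_, (scaledWord_injective hm).injOn, fun w ⟨hw, hdvd, hpos⟩ ↦ ?_⟩
  · exact ⟨(isLukasiewicz_scaledWord_iff hmn hpos).mpr hsum, dvd_scaledWord m c,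
      (pathHeight_pos_scaledWord_iff m c).mpr hpos⟩
  · have hwL : w L = 0 := hw.eq_zero_of_pathHeight_pos (hpos L (NeZero.pos L) (by lia))
    obtain ⟨c, rfl⟩ := exists_scaledWord_eq (L := L) hdvd fun j hj ↦ by
      obtain rfl | hlt := hj.eq_or_lt
      exacts [hwL, hw.eq_zero_of_le j hlt]
    have hc := (pathHeight_pos_scaledWord_iff m c).mp hpos
    exact ⟨c, ⟨(isLukasiewicz_scaledWord_iff hmn hc).mp hw, hc⟩, rfl⟩

theorem mul_ncard_isLukasiewicz_dvd_pathHeight_pos {N : ℕ} (hN : 2 ≤ N) (hmn : m * n = N) :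
    n * {w | IsLukasiewicz N w ∧ (∀ j, m ∣ w j) ∧
      ∀ q, 0 < q → q < N → 0 < pathHeight w q}.ncard = (N + n - 2).choose (n - 1) := by
  obtain ⟨L, rfl⟩ : ∃ L, N = L + 1 := Nat.exists_eq_succ_of_ne_zero (by lia)
  have : NeZero L := ⟨by lia⟩
  rw [← (bijOn_scaledWord hmn).ncard_eq, mul_ncard_prefixSumsPos hmn]
  congr 1
  lia

theorem bijOn_openedSize_dvd_pathHeight_pos {N : ℕ} {a b : Fin N} (ha : (a : ℕ) = 0)
    (hb : (b : ℕ) + 1 = N) (m : ℕ) :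
    Set.BijOn openedSize
      {P : Finpartition (univ : Finset (Fin N)) | IsNoncrossing P ∧ (∀ B ∈ P.parts, m ∣ #B) ∧
        ∃ B ∈ P.parts, a ∈ B ∧ b ∈ B}
      {w | IsLukasiewicz N w ∧ (∀ j, m ∣ w j) ∧ ∀ q, 0 < q → q < N → 0 < pathHeight w q} := by
  have condition_iff {P : Finpartition (univ : Finset (Fin N))} (hP : IsNoncrossing P) :
      ((∀ B ∈ P.parts, m ∣ #B) ∧ ∃ B ∈ P.parts, a ∈ B ∧ b ∈ B) ↔
        (∀ j, m ∣ openedSize P j) ∧ ∀ q, 0 < q → q < N → 0 < pathHeight (openedSize P) q := by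
    rw [forall_dvd_openedSize_iff, ← hP.mem_part_iff_pathHeight_pos ha hb, P.mem_part_iff_exists]
  refine ⟨fun P ⟨hP, h⟩ ↦ ⟨bijOn_openedSize.mapsTo hP, (condition_iff hP).mp h⟩,
    bijOn_openedSize.injOn.mono fun P hP ↦ hP.1, fun w ⟨hw, h⟩ ↦ ?_⟩
  obtain ⟨P, hP, rfl⟩ := bijOn_openedSize.surjOn hw
  exact ⟨P, ⟨hP, (condition_iff hP).mpr h⟩, rfl⟩

end Divisible

/-- For positive integers `m` and `n` with `n ≥ 2`, the number of positive `m`-divisible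
non-crossing partitions of `{1, 2, …, mn}` (non-crossing partitions all of whose block sizes
are divisible by `m` and where `1` and `mn` lie in the same block) equals
`(1/n) · C((m+1)n - 2, n - 1)`. -/
theorem stmt4 (m n : ℕ) (hm : 0 < m) (hn : 2 ≤ n) :
    n * Nat.card {P : Finpartition (Finset.univ : Finset (Fin (m * n))) //
        IsNoncrossing P ∧ (∀ B ∈ P.parts, m ∣ B.card) ∧
        ∃ B ∈ P.parts,
          (⟨0, Nat.mul_pos hm (by omega)⟩ : Fin (m * n)) ∈ B ∧
          (⟨m * n - 1, Nat.sub_lt (Nat.mul_pos hm (by omega)) Nat.one_pos⟩ : Fin (m * n)) ∈ B} =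
      Nat.choose ((m + 1) * n - 2) (n - 1) := by
  have hN : 2 ≤ m * n := hn.trans (Nat.le_mul_of_pos_left n hm)
  have hcard := (bijOn_openedSize_dvd_pathHeight_pos (N := m * n)
    (a := ⟨0, by lia⟩) (b := ⟨m * n - 1, by lia⟩) rfl (Nat.sub_add_cancel (by lia)) m).ncard_eq
  rw [add_one_mul, ← mul_ncard_isLukasiewicz_dvd_pathHeight_pos hN rfl, ← hcard]
  rfl
end
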